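/- Let n, s, k be positive integers with k ≥ 2 and n > 2k³s. If F ⊆ binom([n],k) is a k-graph with ν(F) ≤ s < τ(F), then |F| ≤ C(n,k) − C(n−s, k) − C(n−s−k, k−1) + 1. -/

import Mathlib

/-- The `(x,y)`-shift of a single edge `A` with respect to the family `F`. -/
def shiftEdge (x y : ℕ) (F : Finset (Finset ℕ)) (A : Finset ℕ) : Finset ℕ :=
  if y ∈ A ∧ x ∉ A ∧ insert x (A.erase y) ∉ F then insert x (A.erase y) else A

/-- The `(x,y)`-shift of a family `F`. -/
def shiftFam (x y : ℕ) (F : Finset (Finset ℕ)) : Finset (Finset ℕ) :=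
  F.image (shiftEdge x y F)

/-- The matching number: the largest size of a pairwise-disjoint subfamily. -/
noncomputable def matchingNumber (F : Finset (Finset ℕ)) : ℕ :=
  sSup {m | ∃ M ⊆ F, M.card = m ∧ (M : Set (Finset ℕ)).PairwiseDisjoint id}

/-- `F` is non-trivial on `[n]`: no vertex of `[n] = {1,…,n}` is isolated. -/
def NonTrivial (n : ℕ) (F : Finset (Finset ℕ)) : Prop :=
  ∀ v ∈ Finset.Icc 1 n, ∃ A ∈ F, v ∈ A

/-- `F` is shifted on `Y`: all `(x,y)`-shifts with `x < y` in `Y` fix `F`. -/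
def ShiftedOn (Y : Finset ℕ) (F : Finset (Finset ℕ)) : Prop :=
  ∀ x ∈ Y, ∀ y ∈ Y, x < y → shiftFam x y F = F

/-- The clique number of the `k`-graph `F` on `[n]`. -/
noncomputable def cliqueNum (n k : ℕ) (F : Finset (Finset ℕ)) : ℕ :=
  sSup {m | ∃ U ⊆ Finset.Icc 1 n, U.card = m ∧ Finset.powersetCard k U ⊆ F}

/-- The vertex-cover number of the `k`-graph `F` on `[n]`. -/
noncomputable def coverNum (n : ℕ) (F : Finset (Finset ℕ)) : ℕ :=
  sInf {t | ∃ T ⊆ Finset.Icc 1 n, T.card = t ∧ ∀ A ∈ F, (A ∩ T).Nonempty}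

/-- The link `N_F(x)`. -/
def nbr (F : Finset (Finset ℕ)) (x : ℕ) : Finset (Finset ℕ) :=
  (F.filter fun A => x ∈ A).image fun A => A.erase x

/-- The link `N_F(x,y)`. -/
def nbr2 (F : Finset (Finset ℕ)) (x y : ℕ) : Finset (Finset ℕ) :=
  (F.filter fun A => x ∈ A ∧ y ∈ A).image fun A => (A.erase x).erase y

/-- The link `N_F(x, ȳ)`. -/
def nbrBar (F : Finset (Finset ℕ)) (x y : ℕ) : Finset (Finset ℕ) :=
  (F.filter fun A => x ∈ A ∧ y ∉ A).image fun A => A.erase x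

/-- The extremal family `E₀(n,k,s)`. -/
def E0 (n k s : ℕ) : Finset (Finset ℕ) :=
  Finset.powersetCard k (Finset.Icc 1 (k * s + k - 2)) ∪
  ((Finset.powersetCard k (Finset.Icc 1 n)).filter
    (fun A => A \ Finset.Icc 1 (k * s + k - 2) = {k * s + k - 1} ∧
      (A ∩ Finset.Icc 1 (k - 1)).Nonempty)) ∪
  ((Finset.Icc (k * s + k) n).image (fun x => insert x (Finset.Icc 1 (k - 1))))

open Classical in
/-- The extremal family `E₁(n,k,s)`. -/
noncomputable def E1 (n k s : ℕ) : Finset (Finset ℕ) :=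
  Finset.powersetCard k (Finset.Icc 1 (k * s + k - 2)) ∪
  ((Finset.powersetCard k (Finset.Icc 1 n)).filter
    (fun A => 1 ∈ A ∧ ∃ x ∈ Finset.Icc (k * s + k - 1) n,
      A \ Finset.Icc 1 (k * s + k - 2) = {x}))

/-- `F` is `s`-saturated on `[n]`. -/
def Saturated (n k s : ℕ) (F : Finset (Finset ℕ)) : Prop :=
  matchingNumber F ≤ s ∧
  ∀ G ∈ Finset.powersetCard k (Finset.Icc 1 n), G ∉ F →
    matchingNumber (insert G F) = s + 1


/-!
Induction on `s`. Suppose `ν(F) ≤ s + 1`. If deleting some vertex `v` lowers the matching number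
to `s`, apply induction to the edges avoiding `v`; at most `C(n - 1, k - 1)` edges contain `v`.
Otherwise every vertex `v` is avoided by a matching of `s + 1` edges, whose union has `(s + 1) k`
vertices and meets every edge. Choosing the vertices of an edge one after the other inside such
unions gives `|F| ≤ ((s + 1) k)² C(n - 2, k - 2)`, which is small since `n` is large.

The base case `s = 1` is the Hilton–Milner theorem for `n ≥ k³`. If no two vertices cover `F`, the
same counting gives `|F| ≤ k³ C(n - 3, k - 3)`. If `{x, y}` is a cover, the links of `x` without
`y` and of `y` without `x` are nonempty and cross-intersecting, and it suffices to bound the sum of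
their sizes.
-/

open Finset

namespace BollobasDaykinErdos

section Binomial

variable {n m k r M N c d : ℕ}

lemma choose_add_mul_choose_pred_le (hk : 0 < k) (hn : M + d ≤ n) :
    M.choose k + d * M.choose (k - 1) ≤ n.choose k := by
  induction d generalizing n with
  | zero => simpa using Nat.choose_le_choose k hn
  | succ d ih =>
    have pascal := Nat.choose_eq_choose_pred_add (n := n) (by lia) hk
    have tail := ih (n := n - 1) (by lia)
    have head : M.choose (k - 1) ≤ (n - 1).choose (k - 1) := Nat.choose_le_choose _ (by lia)
    rw [add_one_mul]
    lia

lemma choose_le_choose_add_mul_choose_pred (hk : 0 < k) (hn : n ≤ M + d) :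
    n.choose k ≤ M.choose k + d * (n - 1).choose (k - 1) := by
  induction d generalizing n with
  | zero => simpa using Nat.choose_le_choose k hn
  | succ d ih =>
    rcases n.eq_zero_or_pos with rfl | hpos
    · simp [Nat.choose_eq_zero_of_lt hk]
    have pascal := Nat.choose_eq_choose_pred_add hpos hk
    have tail := ih (n := n - 1) (by lia)
    have head : d * (n - 1 - 1).choose (k - 1) ≤ d * (n - 1).choose (k - 1) :=
      Nat.mul_le_mul_left _ (Nat.choose_le_choose _ (by lia))
    rw [add_one_mul]
    lia

lemma mul_choose_pred_le_choose (hk : 0 < k) (hM : N + 1 ≤ M + d) (h : k * (c + d) ≤ N + 1) :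
    c * N.choose (k - 1) ≤ M.choose k := by
  have absorb : (N + 1) * N.choose (k - 1) = (N + 1).choose k * k := by
    simpa only [Nat.sub_add_cancel hk] using Nat.add_one_mul_choose_eq N (k - 1)
  have scaled : (c + d) * N.choose (k - 1) ≤ (N + 1).choose k := by
    refine Nat.le_of_mul_le_mul_left ?_ hk
    calc k * ((c + d) * N.choose (k - 1)) = k * (c + d) * N.choose (k - 1) := by ring
      _ ≤ (N + 1) * N.choose (k - 1) := Nat.mul_le_mul_right _ h
      _ = k * (N + 1).choose k := by rw [absorb, mul_comm]
  have upper := choose_le_choose_add_mul_choose_pred hk hM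
  rw [Nat.add_sub_cancel] at upper
  rw [add_mul] at scaled
  lia

lemma two_mul_choose_add_choose_le (hm : 2 * r ^ 2 < m) :
    2 * (m - 1).choose r + (m - (r + 1)).choose (r + 1) ≤ m.choose (r + 1) + 1 := by
  have pascal := Nat.choose_eq_choose_pred_add (n := m) (k := r + 1) (by lia) r.succ_pos
  have r_lt : r < m := by nlinarith [Nat.le_self_pow two_ne_zero r]
  have lower := choose_add_mul_choose_pred_le (n := m - 1) (M := m - (r + 1)) (d := r)
    (k := r + 1) r.succ_pos (by lia)
  rw [Nat.add_sub_cancel] at pascal lower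
  suffices star : (m - 1).choose r ≤ r * (m - (r + 1)).choose r + 1 by lia
  rcases r with _ | _ | r
  · simp
  · simp; lia
  have upper := choose_le_choose_add_mul_choose_pred (n := m - 1) (M := m - (r + 3)) (d := r + 2)
    (k := r + 2) (by lia) (by lia)
  have ratio := mul_choose_pred_le_choose (N := m - 1 - 1) (M := m - (r + 3)) (c := r + 2)
    (d := r + 2) (k := r + 2) (by lia) (by lia) (by
      have : (r + 2) * (r + 2 + (r + 2)) = 2 * (r + 1 + 1) ^ 2 := by ring
      lia)
  calc (m - 1).choose (r + 2) ≤ 2 * (m - (r + 3)).choose (r + 2) := by lia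
    _ ≤ (r + 2) * (m - (r + 3)).choose (r + 2) + 1 := by
      have := Nat.mul_le_mul_right ((m - (r + 3)).choose (r + 2)) (show 2 ≤ r + 2 by lia)
      lia

end Binomial

section Counting

variable {α : Type*} {k d t : ℕ} {V S : Finset α} {F : Finset (Finset α)}

lemma memberSubfamily_subset_powersetCard [DecidableEq α] (hF : F ⊆ powersetCard k V) (x : α) :
    F.memberSubfamily x ⊆ powersetCard (k - 1) (V.erase x) := by
  intro A hA
  obtain ⟨hxA, hx⟩ := mem_memberSubfamily.1 hA
  obtain ⟨hsub, hcard⟩ := mem_powersetCard.1 (hF hxA)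
  rw [card_insert_of_notMem hx] at hcard
  exact mem_powersetCard.2
    ⟨subset_erase.2 ⟨(subset_insert x A).trans hsub, hx⟩, by lia⟩

lemma nonMemberSubfamily_subset_powersetCard [DecidableEq α] (hF : F ⊆ powersetCard k V) (x : α) :
    F.nonMemberSubfamily x ⊆ powersetCard k (V.erase x) := by
  intro A hA
  obtain ⟨hAF, hx⟩ := mem_nonMemberSubfamily.1 hA
  obtain ⟨hsub, hcard⟩ := mem_powersetCard.1 (hF hAF)
  exact mem_powersetCard.2 ⟨subset_erase.2 ⟨hsub, hx⟩, hcard⟩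

lemma card_filter_superset_le [DecidableEq α] (hF : F ⊆ powersetCard k V) (hS : S ⊆ V) :
    #{A ∈ F | S ⊆ A} ≤ (#V - #S).choose (k - #S) := by
  by_cases hSk : #S ≤ k
  · rw [← card_filter_powersetCard_subset S V k hS hSk]
    exact card_le_card (filter_subset_filter _ hF)
  · rw [filter_false_of_mem fun A hA hSA ↦
      hSk ((card_le_card hSA).trans (mem_powersetCard.1 (hF hA)).2.le)]
    simp

lemma card_le_choose_of_forall_mem (hF : F ⊆ powersetCard k V) {x : α} (hx : x ∈ V)
    (h : ∀ A ∈ F, x ∈ A) : #F ≤ (#V - 1).choose (k - 1) := by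
  classical
  simpa [filter_true_of_mem h] using card_filter_superset_le hF (singleton_subset_iff.2 hx)

lemma card_filter_superset_le_sum [DecidableEq α] {U : Finset α}
    (h : ∀ A ∈ F, S ⊆ A → ¬Disjoint A U) :
    #{A ∈ F | S ⊆ A} ≤ ∑ u ∈ U, #{A ∈ F | insert u S ⊆ A} := by
  refine (card_le_card fun A hA ↦ ?_).trans card_biUnion_le
  obtain ⟨hAF, hSA⟩ := mem_filter.1 hA
  obtain ⟨u, huA, huU⟩ := not_disjoint_iff.1 (h A hAF hSA)
  exact mem_biUnion.2 ⟨u, huU, mem_filter.2 ⟨hAF, insert_subset huA hSA⟩⟩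

lemma card_le_pow_mul_choose (hF : F ⊆ powersetCard k V)
    (h : ∀ S ⊆ V, #S < t → ∃ U ⊆ V, #U ≤ d ∧ Disjoint S U ∧ ∀ A ∈ F, S ⊆ A → ¬Disjoint A U) :
    #F ≤ d ^ t * (#V - t).choose (k - t) := by
  classical
  suffices superset_bound : ∀ i, ∀ S ⊆ V, #S + i = t →
      #{A ∈ F | S ⊆ A} ≤ d ^ i * (#V - t).choose (k - t) by
    simpa using superset_bound t ∅ (empty_subset V) (by simp)
  intro i
  induction i with
  | zero =>
    rintro S hS rfl
    simpa using card_filter_superset_le hF hS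
  | succ i ih =>
    intro S hS hSt
    obtain ⟨U, hUV, hUd, hSU, hmeet⟩ := h S hS (by lia)
    calc #{A ∈ F | S ⊆ A} ≤ ∑ u ∈ U, #{A ∈ F | insert u S ⊆ A} :=
          card_filter_superset_le_sum hmeet
      _ ≤ #U * (d ^ i * (#V - t).choose (k - t)) := by
          refine sum_le_card_nsmul _ _ _ fun u hu ↦ ih _ (insert_subset (hUV hu) hS) ?_
          rw [card_insert_of_notMem (disjoint_right.1 hSU hu)]
          lia
      _ ≤ d * (d ^ i * (#V - t).choose (k - t)) := Nat.mul_le_mul_right _ hUd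
      _ = d ^ (i + 1) * (#V - t).choose (k - t) := by ring

end Counting

section CrossIntersecting

variable {α : Type*} {r : ℕ} {V b c : Finset α} {A B : Finset (Finset α)}

lemma card_add_card_le_choose {D : Finset (Finset α)} (hA : A ⊆ powersetCard r V)
    (hD : D ⊆ powersetCard r V) (hAD : Disjoint A D) : #A + #D ≤ (#V).choose r := by
  classical
  rw [← card_union_of_disjoint hAD, ← card_powersetCard]
  exact card_le_card (union_subset hA hD)

lemma card_powersetCard_sdiff [DecidableEq α] (hb : b ∈ powersetCard r V) :
    #(powersetCard r (V \ b)) = (#V - r).choose r := by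
  obtain ⟨hbV, hbr⟩ := mem_powersetCard.1 hb
  rw [card_powersetCard, card_sdiff_of_subset hbV, hbr]

lemma disjoint_powersetCard_sdiff [DecidableEq α] (hAb : ∀ a ∈ A, ¬Disjoint a b) :
    Disjoint A (powersetCard r (V \ b)) :=
  disjoint_left.2 fun a ha hab ↦
    hAb a ha (disjoint_of_subset_left (mem_powersetCard.1 hab).1 sdiff_disjoint)

lemma card_add_choose_le_of_forall_meets (hA : A ⊆ powersetCard r V) (hb : b ∈ powersetCard r V)
    (hAb : ∀ a ∈ A, ¬Disjoint a b) : #A + (#V - r).choose r ≤ (#V).choose r := by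
  classical
  rw [← card_powersetCard_sdiff hb]
  exact card_add_card_le_choose hA (powersetCard_mono sdiff_subset)
    (disjoint_powersetCard_sdiff hAb)

lemma choose_add_choose_le_card_union_powersetCard_sdiff [DecidableEq α] (hr : 0 < r)
    (hb : b ∈ powersetCard r V) (hc : c ∈ powersetCard r V) (hbc : b ≠ c) :
    (#V - r).choose r + (#V - r - 1).choose (r - 1) ≤
      #(powersetCard r (V \ b) ∪ powersetCard r (V \ c)) := by
  obtain ⟨hbV, hbr⟩ := mem_powersetCard.1 hb
  obtain ⟨hcV, hcr⟩ := mem_powersetCard.1 hc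
  have union_card : r < #(b ∪ c) := by
    rw [← hbr]
    refine card_lt_card (ssubset_of_subset_of_ne subset_union_left fun h ↦ hbc ?_)
    exact (eq_of_subset_of_card_le (union_eq_left.1 h.symm) (hbr.trans hcr.symm).le).symm
  have union_le := card_le_card (union_subset hbV hcV)
  have inter_le : #(powersetCard r (V \ b) ∩ powersetCard r (V \ c)) ≤ (#V - r - 1).choose r :=
    calc #(powersetCard r (V \ b) ∩ powersetCard r (V \ c))
        ≤ #(powersetCard r (V \ (b ∪ c))) := card_le_card fun a ha ↦ by
          simp only [mem_inter, mem_powersetCard, subset_sdiff, disjoint_union_right] at ha ⊢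
          tauto
      _ = (#V - #(b ∪ c)).choose r := by
          rw [card_powersetCard, card_sdiff_of_subset (union_subset hbV hcV)]
      _ ≤ (#V - r - 1).choose r := Nat.choose_le_choose r (by lia)
  have incl_excl := card_union_add_card_inter (powersetCard r (V \ b)) (powersetCard r (V \ c))
  rw [card_powersetCard_sdiff hb, card_powersetCard_sdiff hc] at incl_excl
  have pascal := Nat.choose_eq_choose_pred_add (n := #V - r) (by lia) hr
  lia

lemma card_add_choose_le_of_forall_meets_two (hr : 0 < r) (hA : A ⊆ powersetCard r V)
    (hb : b ∈ powersetCard r V) (hc : c ∈ powersetCard r V) (hbc : b ≠ c)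
    (hAb : ∀ a ∈ A, ¬Disjoint a b) (hAc : ∀ a ∈ A, ¬Disjoint a c) :
    #A + ((#V - r).choose r + (#V - r - 1).choose (r - 1)) ≤ (#V).choose r := by
  classical
  calc #A + ((#V - r).choose r + (#V - r - 1).choose (r - 1))
      ≤ #A + #(powersetCard r (V \ b) ∪ powersetCard r (V \ c)) := by
        gcongr
        exact choose_add_choose_le_card_union_powersetCard_sdiff hr hb hc hbc
    _ ≤ (#V).choose r :=
        card_add_card_le_choose hA
          (union_subset (powersetCard_mono sdiff_subset) (powersetCard_mono sdiff_subset))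
          (disjoint_union_right.2
            ⟨disjoint_powersetCard_sdiff hAb, disjoint_powersetCard_sdiff hAc⟩)

lemma card_le_sq_mul_choose_of_forall_exists_notMem (hA : A ⊆ powersetCard r V)
    (hB : B ⊆ powersetCard r V) (hBne : B.Nonempty) (hcross : ∀ a ∈ A, ∀ b ∈ B, ¬Disjoint a b)
    (hB_star : ∀ x ∈ V, ∃ b ∈ B, x ∉ b) : #A ≤ r ^ 2 * (#V - 2).choose (r - 2) := by
  refine card_le_pow_mul_choose hA fun S hS hScard ↦ ?_
  obtain ⟨b, hb, hSb⟩ : ∃ b ∈ B, Disjoint S b := by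
    rcases Nat.le_one_iff_eq_zero_or_eq_one.1 (Nat.le_of_lt_succ hScard) with h | h
    · obtain ⟨b, hb⟩ := hBne
      exact ⟨b, hb, by simp [card_eq_zero.1 h]⟩
    · obtain ⟨x, rfl⟩ := card_eq_one.1 h
      simpa using hB_star x (singleton_subset_iff.1 hS)
  obtain ⟨hbV, hbr⟩ := mem_powersetCard.1 (hB hb)
  exact ⟨b, hbV, hbr.le, hSb, fun a ha _ ↦ hcross a ha b hb⟩

lemma card_le_choose_pred_of_sq_mul_choose_lt (hA : A ⊆ powersetCard r V)
    (hB : B ⊆ powersetCard r V) (hBne : B.Nonempty) (hcross : ∀ a ∈ A, ∀ b ∈ B, ¬Disjoint a b)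
    (hlarge : r ^ 2 * (#V - 2).choose (r - 2) < #A) : #B ≤ (#V - 1).choose (r - 1) := by
  obtain ⟨x, hx, hxB⟩ : ∃ x ∈ V, ∀ b ∈ B, x ∈ b := by
    by_contra! h
    exact hlarge.not_ge (card_le_sq_mul_choose_of_forall_exists_notMem hA hB hBne hcross h)
  exact card_le_choose_of_forall_mem hB hx hxB

lemma sq_mul_choose_sub_two_le {m : ℕ} (hr : 0 < r) (hm : r ^ 3 ≤ m) :
    r ^ 2 * (m - 2).choose (r - 2) ≤ (m - r - 1).choose (r - 1) := by
  obtain rfl | hr' : r = 1 ∨ 1 < r := by lia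
  · simp
  obtain ⟨q, rfl⟩ : ∃ q, r = q + 2 := ⟨r - 2, by lia⟩
  have : 2 ≤ m := by nlinarith [Nat.le_self_pow three_ne_zero (q + 2)]
  refine mul_choose_pred_le_choose (k := q + 1) (d := q + 2) q.succ_pos (by lia) ?_
  have : m - 2 + 1 + 1 = m := by lia
  nlinarith

lemma card_add_card_add_choose_le_of_card_le (hr : 0 < r) (hV : r ^ 3 ≤ #V)
    (hA : A ⊆ powersetCard r V) (hB : B ⊆ powersetCard r V) (hBne : B.Nonempty)
    (hcross : ∀ a ∈ A, ∀ b ∈ B, ¬Disjoint a b) (hBA : #B ≤ #A) :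
    #A + #B + (#V - r).choose r ≤ (#V).choose r + 1 := by
  rcases Nat.lt_or_ge 1 #B with hB1 | hB1
  swap
  · obtain ⟨b, hb⟩ := hBne
    have := card_add_choose_le_of_forall_meets hA (hB hb) fun a ha ↦ hcross a ha b hb
    lia
  obtain ⟨b, hb, c, hc, hbc⟩ := one_lt_card.1 hB1
  have meets_two := card_add_choose_le_of_forall_meets_two hr hA (hB hb) (hB hc) hbc
    (fun a ha ↦ hcross a ha b hb) (fun a ha ↦ hcross a ha c hc)
  rcases Nat.lt_or_ge ((#V - r - 1).choose (r - 1) + 1) #B with hBlarge | hBsmall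
  swap
  · lia
  have threshold := sq_mul_choose_sub_two_le hr hV
  have A_star : #A ≤ (#V - 1).choose (r - 1) :=
    card_le_choose_pred_of_sq_mul_choose_lt hB hA (card_pos.1 (by lia))
      (fun b hb a ha hba ↦ hcross a ha b hb hba.symm) (by lia)
  have B_star : #B ≤ (#V - 1).choose (r - 1) :=
    card_le_choose_pred_of_sq_mul_choose_lt hA hB hBne hcross (by lia)
  obtain ⟨q, rfl⟩ : ∃ q, r = q + 1 := ⟨r - 1, by lia⟩
  have two_stars := two_mul_choose_add_choose_le (m := #V) (r := q) (by nlinarith)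
  rw [Nat.add_sub_cancel] at A_star B_star
  lia

theorem card_add_card_add_choose_le_of_cross_intersecting (hr : 0 < r) (hV : r ^ 3 ≤ #V)
    (hA : A ⊆ powersetCard r V) (hB : B ⊆ powersetCard r V) (hAne : A.Nonempty)
    (hBne : B.Nonempty) (hcross : ∀ a ∈ A, ∀ b ∈ B, ¬Disjoint a b) :
    #A + #B + (#V - r).choose r ≤ (#V).choose r + 1 := by
  rcases le_total #B #A with h | h
  · exact card_add_card_add_choose_le_of_card_le hr hV hA hB hBne hcross h
  · rw [add_comm #A]
    exact card_add_card_add_choose_le_of_card_le hr hV hB hA hAne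
      (fun b hb a ha hba ↦ hcross a ha b hb hba.symm) h

end CrossIntersecting

section HiltonMilner

variable {α : Type*} [DecidableEq α] {k : ℕ} {V : Finset α} {F : Finset (Finset α)}

lemma card_le_cube_mul_choose_of_no_two_cover (hF : F ⊆ powersetCard k V)
    (hint : (F : Set (Finset α)).Intersecting)
    (hcover : ∀ S ⊆ V, #S ≤ 2 → ∃ A ∈ F, Disjoint S A) :
    #F ≤ k ^ 3 * (#V - 3).choose (k - 3) := by
  refine card_le_pow_mul_choose hF fun S hS hScard ↦ ?_
  obtain ⟨E, hE, hSE⟩ := hcover S hS (by lia)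
  obtain ⟨hEV, hEk⟩ := mem_powersetCard.1 (hF hE)
  exact ⟨E, hEV, hEk.le, hSE, fun A hA _ ↦ hint hA hE⟩

lemma cube_mul_choose_sub_three_add_choose_le {n : ℕ} (hk : 3 ≤ k) (hn : k ^ 3 ≤ n) :
    k ^ 3 * (n - 3).choose (k - 3) + (n - 1 - k).choose (k - 1) ≤ (n - 1).choose (k - 1) := by
  obtain ⟨q, rfl⟩ : ∃ q, k = q + 3 := ⟨k - 3, by lia⟩
  have : (q + 1) * ((q + 3) ^ 2 + (q + 2)) + 2 ≤ n := by nlinarith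
  have : q + 4 ≤ n := by nlinarith
  have ratio : (q + 3) ^ 2 * (n - 3).choose q ≤ (n - 1 - (q + 3)).choose (q + 1) :=
    mul_choose_pred_le_choose (k := q + 1) (d := q + 2) q.succ_pos (by lia) (by lia)
  have lower : (n - 1 - (q + 3)).choose (q + 2) +
      (q + 3) * (n - 1 - (q + 3)).choose (q + 1) ≤ (n - 1).choose (q + 2) :=
    choose_add_mul_choose_pred_le (k := q + 2) (by lia) (by lia)
  calc (q + 3) ^ 3 * (n - 3).choose q + (n - 1 - (q + 3)).choose (q + 2)
      = (q + 3) * ((q + 3) ^ 2 * (n - 3).choose q) + (n - 1 - (q + 3)).choose (q + 2) := by ring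
    _ ≤ (q + 3) * (n - 1 - (q + 3)).choose (q + 1) + (n - 1 - (q + 3)).choose (q + 2) := by
      gcongr
    _ ≤ (n - 1).choose (q + 2) := by lia

lemma card_eq_of_forall_mem_or_mem {x y : α} (hcover : ∀ A ∈ F, x ∈ A ∨ y ∈ A) :
    #F = #((F.memberSubfamily x).memberSubfamily y) +
      #((F.memberSubfamily x).nonMemberSubfamily y) +
      #((F.nonMemberSubfamily x).memberSubfamily y) := by
  have avoid_both : (F.nonMemberSubfamily x).nonMemberSubfamily y = ∅ := by
    ext A
    simp only [mem_nonMemberSubfamily, notMem_empty, iff_false]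
    have := hcover A
    tauto
  have split_x := card_memberSubfamily_add_card_nonMemberSubfamily x F
  have split_y := card_memberSubfamily_add_card_nonMemberSubfamily y (F.memberSubfamily x)
  have split_y' := card_memberSubfamily_add_card_nonMemberSubfamily y (F.nonMemberSubfamily x)
  rw [avoid_both, card_empty] at split_y'
  lia

lemma not_disjoint_links {x y : α} (hint : (F : Set (Finset α)).Intersecting) :
    ∀ a ∈ (F.memberSubfamily x).nonMemberSubfamily y,
      ∀ b ∈ (F.nonMemberSubfamily x).memberSubfamily y, ¬Disjoint a b := by
  intro a ha b hb
  simp only [mem_nonMemberSubfamily, mem_memberSubfamily, mem_insert, not_or] at ha hb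
  have hyx : y ≠ x := Ne.symm hb.1.2.1
  have := hint ha.1.1 hb.1.1
  simp_all [disjoint_insert_left, disjoint_insert_right]

lemma links_nonempty {x y : α} (hcover : ∀ A ∈ F, x ∈ A ∨ y ∈ A)
    (hx : ∃ A ∈ F, x ∉ A) (hy : ∃ A ∈ F, y ∉ A) :
    ((F.memberSubfamily x).nonMemberSubfamily y).Nonempty ∧
      ((F.nonMemberSubfamily x).memberSubfamily y).Nonempty := by
  obtain ⟨A, hA, hyA⟩ := hy
  obtain ⟨B, hB, hxB⟩ := hx
  have hxA := (hcover A hA).resolve_right hyA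
  have hyB := (hcover B hB).resolve_left hxB
  exact ⟨⟨A.erase x, by simp [hA, hxA, hyA, insert_erase]⟩,
    ⟨B.erase y, by simp [hB, hxB, hyB, insert_erase]⟩⟩

lemma card_add_choose_le_of_two_cover (hk : 2 ≤ k) (hV : k ^ 3 ≤ #V) (hF : F ⊆ powersetCard k V)
    (hint : (F : Set (Finset α)).Intersecting) (hnontriv : ∀ x ∈ V, ∃ A ∈ F, x ∉ A)
    {x y : α} (hx : x ∈ V) (hy : y ∈ V) (hxy : x ≠ y) (hcover : ∀ A ∈ F, x ∈ A ∨ y ∈ A) :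
    #F + (#V - 1 - k).choose (k - 1) ≤ (#V - 1).choose (k - 1) + 1 := by
  set W := (V.erase x).erase y with hW
  have W_card : #W = #V - 1 - 1 := by
    rw [hW, card_erase_of_mem (mem_erase.2 ⟨hxy.symm, hy⟩), card_erase_of_mem hx]
  have W_large : (k - 1) ^ 3 ≤ #W := by
    obtain ⟨q, rfl⟩ : ∃ q, k = q + 2 := ⟨k - 2, by lia⟩
    have : (q + 1) ^ 3 + 2 ≤ (q + 2) ^ 3 := by nlinarith
    simp only [show q + 2 - 1 = q + 1 by lia]
    lia
  obtain ⟨linkx_ne, linky_ne⟩ := links_nonempty hcover (hnontriv x hx) (hnontriv y hy)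
  have links := card_add_card_add_choose_le_of_cross_intersecting (by lia) W_large
    (nonMemberSubfamily_subset_powersetCard (memberSubfamily_subset_powersetCard hF x) y)
    (memberSubfamily_subset_powersetCard (nonMemberSubfamily_subset_powersetCard hF x) y)
    linkx_ne linky_ne (not_disjoint_links hint)
  have common : #((F.memberSubfamily x).memberSubfamily y) ≤ (#W).choose (k - 1 - 1) := by
    rw [← card_powersetCard]
    exact card_le_card
      (memberSubfamily_subset_powersetCard (memberSubfamily_subset_powersetCard hF x) y)
  have pascal := Nat.choose_eq_choose_pred_add (n := #V - 1) (k := k - 1) (by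
    have := card_pos.2 ⟨y, mem_erase.2 ⟨hxy.symm, hy⟩⟩
    rwa [card_erase_of_mem hx] at this) (by lia)
  have split := card_eq_of_forall_mem_or_mem hcover
  rw [W_card] at links common
  rw [show #V - 1 - k = #V - 1 - 1 - (k - 1) by lia]
  lia

theorem hilton_milner (hk : 2 ≤ k) (hV : k ^ 3 ≤ #V) (hF : F ⊆ powersetCard k V)
    (hint : (F : Set (Finset α)).Intersecting) (hnontriv : ∀ x ∈ V, ∃ A ∈ F, x ∉ A) :
    #F + (#V - 1 - k).choose (k - 1) ≤ (#V - 1).choose (k - 1) + 1 := by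
  have two_le : 2 ≤ #V := by nlinarith [Nat.pow_le_pow_left hk 3]
  by_cases hcover : ∃ S ⊆ V, #S ≤ 2 ∧ ∀ A ∈ F, ¬Disjoint S A
  · obtain ⟨S, hSV, hS, hmeet⟩ := hcover
    obtain ⟨T, hST, hTV, hT⟩ := exists_subsuperset_card_eq hSV hS two_le
    obtain ⟨x, y, hxy, rfl⟩ := card_eq_two.1 hT
    simp only [insert_subset_iff, singleton_subset_iff] at hTV
    refine card_add_choose_le_of_two_cover hk hV hF hint hnontriv hTV.1 hTV.2 hxy fun A hA ↦ ?_
    obtain ⟨z, hzS, hzA⟩ := not_disjoint_iff.1 (hmeet A hA)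
    rcases mem_insert.1 (hST hzS) with rfl | hz
    · exact Or.inl hzA
    · exact Or.inr (mem_singleton.1 hz ▸ hzA)
  · push Not at hcover
    have three_le : 3 ≤ k := by
      obtain ⟨E, hE, -⟩ := hcover ∅ (empty_subset V) (by simp)
      obtain ⟨hEV, hEk⟩ := mem_powersetCard.1 (hF hE)
      by_contra! hk3
      obtain ⟨A, hA, hEA⟩ := hcover E hEV (by lia)
      exact hint hE hA hEA
    have upper := card_le_cube_mul_choose_of_no_two_cover hF hint hcover
    have := cube_mul_choose_sub_three_add_choose_le three_le hV
    lia

end HiltonMilner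

section Matching

variable {α : Type*} [DecidableEq α] {k s : ℕ} {V : Finset α} {F M : Finset (Finset α)}

lemma not_disjoint_biUnion_of_forall_card_le (hF : F ⊆ powersetCard k V) (hk : 0 < k)
    (hM : M ⊆ F) (hdisj : (M : Set (Finset α)).PairwiseDisjoint id)
    (hmax : ∀ M' ⊆ F, (M' : Set (Finset α)).PairwiseDisjoint id → #M' ≤ #M) :
    ∀ A ∈ F, ¬Disjoint A (M.biUnion id) := by
  intro A hA hAM
  rw [disjoint_biUnion_right] at hAM
  have hAne : A.Nonempty := card_pos.1 ((mem_powersetCard.1 (hF hA)).2 ▸ hk)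
  have hnotMem : A ∉ M := fun h ↦ hAne.ne_empty (disjoint_self_iff_empty A |>.1 (hAM A h))
  have := hmax (insert A M) (insert_subset hA hM) (by
    rw [coe_insert]
    exact hdisj.insert fun B hB _ ↦ hAM B hB)
  rw [card_insert_of_notMem hnotMem] at this
  lia

lemma intersecting_of_forall_card_le_one (hF : F ⊆ powersetCard k V) (hk : 0 < k)
    (hν : ∀ M ⊆ F, (M : Set (Finset α)).PairwiseDisjoint id → #M ≤ 1) :
    (F : Set (Finset α)).Intersecting := by
  intro A hA B hB
  simpa using not_disjoint_biUnion_of_forall_card_le hF hk (M := {B})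
    (singleton_subset_iff.2 hB) (by simp) (by simpa using hν) A hA

lemma card_le_sq_mul_choose_of_forall_exists_matching (hF : F ⊆ powersetCard k V) (hk : 0 < k)
    (hV : V.Nonempty) (hν : ∀ M ⊆ F, (M : Set (Finset α)).PairwiseDisjoint id → #M ≤ s)
    (h : ∀ v ∈ V, ∃ M ⊆ F.nonMemberSubfamily v,
      (M : Set (Finset α)).PairwiseDisjoint id ∧ s ≤ #M) :
    #F ≤ (s * k) ^ 2 * (#V - 2).choose (k - 2) := by
  refine card_le_pow_mul_choose hF fun S hS hScard ↦ ?_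
  obtain ⟨T, hST, hTV, hT⟩ := exists_subsuperset_card_eq hS (Nat.le_of_lt_succ hScard) hV.card_pos
  obtain ⟨v, rfl⟩ := card_eq_one.1 hT
  obtain ⟨M, hM, hdisj, hsM⟩ := h v (singleton_subset_iff.1 hTV)
  have hMF : M ⊆ F := hM.trans (filter_subset _ _)
  refine ⟨M.biUnion id, ?_, ?_, ?_, fun A hA _ ↦ ?_⟩
  · exact biUnion_subset.2 fun A hA ↦ (mem_powersetCard.1 (hF (hMF hA))).1
  · calc #(M.biUnion id) ≤ #M * k :=
          card_biUnion_le_card_mul _ _ _ fun A hA ↦ (mem_powersetCard.1 (hF (hMF hA))).2.le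
      _ ≤ s * k := Nat.mul_le_mul_right k (hν M hMF hdisj)
  · refine disjoint_of_subset_left hST (disjoint_singleton_left.2 fun hv ↦ ?_)
    obtain ⟨A, hA, hvA⟩ := mem_biUnion.1 hv
    exact (mem_nonMemberSubfamily.1 (hM hA)).2 hvA
  · exact not_disjoint_biUnion_of_forall_card_le hF hk hMF hdisj
      (fun M' hM' hdisj' ↦ (hν M' hM' hdisj').trans hsM) A hA

lemma sq_mul_choose_add_choose_le {n : ℕ} (hk : 2 ≤ k) (hs : 1 ≤ s)
    (hn : 2 * k ^ 3 * (s + 1) < n) :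
    ((s + 1) * k) ^ 2 * (n - 2).choose (k - 2) + (n - (s + 1)).choose k +
      (n - (s + 1) - k).choose (k - 1) ≤ n.choose k := by
  obtain ⟨q, rfl⟩ : ∃ q, k = q + 2 := ⟨k - 2, by lia⟩
  have large : (q + 1) * (2 * (s + 1) * (q + 2) ^ 2 + (s - 1)) + 1 ≤ n ∧ s + 2 ≤ n := by
    obtain ⟨t, rfl⟩ : ∃ t, s = t + 1 := ⟨s - 1, by lia⟩
    rw [Nat.add_sub_cancel]
    have cube_pos : 0 < (q + 2) ^ 3 := by positivity
    constructor <;> nlinarith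
  have ratio : 2 * (s + 1) * (q + 2) ^ 2 * (n - 2).choose q ≤ (n - s).choose (q + 1) :=
    mul_choose_pred_le_choose (k := q + 1) (d := s - 1) q.succ_pos (by lia) (by lia)
  have counted : ((s + 1) * (q + 2)) ^ 2 * (n - 2).choose q ≤ s * (n - s).choose (q + 1) :=
    calc ((s + 1) * (q + 2)) ^ 2 * (n - 2).choose q
        = (s + 1) * ((s + 1) * (q + 2) ^ 2 * (n - 2).choose q) := by ring
      _ ≤ 2 * s * ((s + 1) * (q + 2) ^ 2 * (n - 2).choose q) :=
        Nat.mul_le_mul_right _ (by lia)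
      _ = s * (2 * (s + 1) * (q + 2) ^ 2 * (n - 2).choose q) := by ring
      _ ≤ s * (n - s).choose (q + 1) := Nat.mul_le_mul_left s ratio
  have lower : (n - s).choose (q + 2) + s * (n - s).choose (q + 1) ≤ n.choose (q + 2) :=
    choose_add_mul_choose_pred_le (k := q + 2) (by lia) (by lia)
  have pascal : (n - s).choose (q + 2) =
      (n - (s + 1)).choose (q + 1) + (n - (s + 1)).choose (q + 2) :=
    Nat.choose_eq_choose_pred_add (by lia) (by lia)
  have shrink : (n - (s + 1) - (q + 2)).choose (q + 1) ≤ (n - (s + 1)).choose (q + 1) :=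
    Nat.choose_le_choose _ (by lia)
  simp only [Nat.add_sub_cancel, show q + 2 - 1 = q + 1 by lia]
  lia

lemma exists_disjoint_nonMemberSubfamily {v : α} (hv : v ∈ V)
    (hτ : ∀ T ⊆ V, #T ≤ s + 1 → ∃ A ∈ F, Disjoint A T) :
    ∀ T ⊆ V.erase v, #T ≤ s → ∃ A ∈ F.nonMemberSubfamily v, Disjoint A T := by
  intro T hT hTs
  obtain ⟨A, hA, hAT⟩ := hτ (insert v T) (insert_subset hv (hT.trans (erase_subset v V)))
    ((card_insert_le v T).trans (by lia))
  rw [disjoint_insert_right] at hAT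
  exact ⟨A, mem_nonMemberSubfamily.2 ⟨hA, hAT.1⟩, hAT.2⟩

end Matching

end BollobasDaykinErdos

open BollobasDaykinErdos

theorem stmt16_general {α : Type*} {k s : ℕ} (hk : 2 ≤ k) (hs : 1 ≤ s)
    {V : Finset α} {F : Finset (Finset α)} (hV : 2 * k ^ 3 * s < #V) (hF : F ⊆ powersetCard k V)
    (hν : ∀ M ⊆ F, (M : Set (Finset α)).PairwiseDisjoint id → #M ≤ s)
    (hτ : ∀ T ⊆ V, #T ≤ s → ∃ A ∈ F, Disjoint A T) :
    (#F : ℤ) ≤ (#V).choose k - (#V - s).choose k - (#V - s - k).choose (k - 1) + 1 := by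
  classical
  induction s, hs using Nat.le_induction generalizing V F with
  | base =>
    have bound := hilton_milner hk (by lia) hF
      (intersecting_of_forall_card_le_one hF (by lia) hν)
      (fun x hx ↦ by simpa using hτ {x} (singleton_subset_iff.2 hx) (by simp))
    have pascal := Nat.choose_eq_choose_pred_add (n := #V) (k := k) (by lia) (by lia)
    lia
  | succ s hs ih =>
    by_cases hdel : ∃ v ∈ V, ∀ M ⊆ F.nonMemberSubfamily v,
        (M : Set (Finset α)).PairwiseDisjoint id → #M ≤ s
    · obtain ⟨v, hv, hνv⟩ := hdel
      have erase_card := card_erase_of_mem hv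
      have avoiding := ih (by nlinarith [Nat.pow_le_pow_left hk 3, card_erase_add_one hv])
        (nonMemberSubfamily_subset_powersetCard hF v) hνv (exists_disjoint_nonMemberSubfamily hv hτ)
      have link := card_le_card (memberSubfamily_subset_powersetCard hF v)
      have split := card_memberSubfamily_add_card_nonMemberSubfamily v F
      have pascal := Nat.choose_eq_choose_pred_add (n := #V) (k := k) (by lia) (by lia)
      rw [erase_card, Nat.sub_sub, add_comm 1 s] at avoiding
      rw [card_powersetCard, erase_card] at link
      lia
    · push Not at hdel
      have bound := card_le_sq_mul_choose_of_forall_exists_matching hF (by lia)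
        (card_pos.1 (by lia)) hν hdel
      have := sq_mul_choose_add_choose_le hk hs hV
      lia

lemma card_le_matchingNumber {F M : Finset (Finset ℕ)} (hM : M ⊆ F)
    (hdisj : (M : Set (Finset ℕ)).PairwiseDisjoint id) : #M ≤ matchingNumber F :=
  le_csSup ⟨#F, by rintro _ ⟨M', hM', rfl, -⟩; exact card_le_card hM'⟩ ⟨M, hM, rfl, hdisj⟩

lemma exists_disjoint_of_card_lt_coverNum {n : ℕ} {F : Finset (Finset ℕ)} {T : Finset ℕ}
    (hT : T ⊆ Icc 1 n) (hlt : #T < coverNum n F) : ∃ A ∈ F, Disjoint A T := by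
  by_contra! h
  exact hlt.not_ge (Nat.sInf_le ⟨T, hT, rfl, fun A hA ↦ not_disjoint_iff_nonempty_inter.1 (h A hA)⟩)

/-- the Bollobás–Daykin–Erdős stability bound. -/
theorem stmt16 (n k s : ℕ) (hk : 2 ≤ k) (hs : 1 ≤ s) (hn : 2 * k ^ 3 * s < n)
    (F : Finset (Finset ℕ)) (hF : F ⊆ Finset.powersetCard k (Finset.Icc 1 n))
    (hnu : matchingNumber F ≤ s) (htau : s < coverNum n F) :
    (F.card : ℤ) ≤ (Nat.choose n k : ℤ) - Nat.choose (n - s) k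
      - Nat.choose (n - s - k) (k - 1) + 1 := by
  simpa using stmt16_general hk hs (by simpa using hn) hF
    (fun M hM hdisj ↦ (card_le_matchingNumber hM hdisj).trans hnu)
    (fun T hT hTs ↦ exists_disjoint_of_card_lt_coverNum hT (hTs.trans_lt htau))
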